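/- Let n ≥ 6 be an even integer. Let M_n^− ∈ T^n be the matrix whose only nonzero entries are the four entries at positions (1, n−1), (1, n), (2, n−1), (2, n), each equal to 1, and let M_n^+ = ι(M_n^−). Then the 𝔊_n-orbits of M_n^+ and M_n^− are disjoint if and only if n ≡ 2 or 4 (mod 8). -/

import Mathlib

/-- `M ∈ T^n`: all entries strictly below the diagonal vanish. -/
def UpperTri (n : ℕ) (M : Matrix (Fin n) (Fin n) (ZMod 2)) : Prop :=
  ∀ i j : Fin n, (j : ℕ) < (i : ℕ) → M i j = 0

/-- The involution `ι : T^n → T^n`, `ι(M)_{ij} = M_{(n+1−j)(n+1−i)} + 1` for `i ≤ j`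
(one-based indexing; entries below the diagonal remain `0`). -/
def iotaT (n : ℕ) (M : Matrix (Fin n) (Fin n) (ZMod 2)) : Matrix (Fin n) (Fin n) (ZMod 2) :=
  Matrix.of fun i j => if (i : ℕ) ≤ (j : ℕ) then M (Fin.rev j) (Fin.rev i) + 1 else 0

/-- The height pairing `⟨M, R_k⟩ = ∑_{1 ≤ r ≤ k ≤ s ≤ n} M_{rs}`. -/
def heightPair (n : ℕ) (M : Matrix (Fin n) (Fin n) (ZMod 2)) (k : Fin n) : ZMod 2 :=
  ∑ r : Fin n, ∑ s : Fin n, if r ≤ k ∧ k ≤ s then M r s else 0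

/-- Safe entry lookup (zero outside range), with zero-based natural-number indices. -/
def ent (n : ℕ) (M : Matrix (Fin n) (Fin n) (ZMod 2)) (r s : ℕ) : ZMod 2 :=
  if h : r < n ∧ s < n then M ⟨r, h.1⟩ ⟨s, h.2⟩ else 0

/-- The generator `g_{ij}` of `𝔊_n` (here `i ≤ j` are zero-based, corresponding to the
one-based indices `i+1 ≤ j+1`): it adds the trace `M_{ij} + M_{i+1,j+1}` of the `2×2`
submatrix with rows `i, i+1` and columns `j, j+1` to each entry of that submatrix lying
in the upper triangle. -/
def gmove (n i j : ℕ) (M : Matrix (Fin n) (Fin n) (ZMod 2)) :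
    Matrix (Fin n) (Fin n) (ZMod 2) :=
  Matrix.of fun r s =>
    if ((r : ℕ) = i ∨ (r : ℕ) = i + 1) ∧ ((s : ℕ) = j ∨ (s : ℕ) = j + 1)
        ∧ (r : ℕ) ≤ (s : ℕ)
    then M r s + (ent n M i j + ent n M (i + 1) (j + 1))
    else M r s

/-- One application of a generator `g_{ij}`, `1 ≤ i ≤ j ≤ n−1` (one-based);
in zero-based indices `i ≤ j` and `j + 2 ≤ n`. -/
def Gstep (n : ℕ) (M M' : Matrix (Fin n) (Fin n) (ZMod 2)) : Prop :=
  ∃ i j : ℕ, i ≤ j ∧ j + 2 ≤ n ∧ M' = gmove n i j M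

/-- `N` belongs to the `𝔊_n`-orbit of `M`: the reflexive-transitive closure of the
generating moves (each generator is an involution, so this is the orbit equivalence). -/
def InOrbit (n : ℕ) (M N : Matrix (Fin n) (Fin n) (ZMod 2)) : Prop :=
  Relation.ReflTransGen (Gstep n) M N

/-- `M_n^−`: the matrix whose only nonzero entries are the four entries at (one-based)
positions `(1, n−1), (1, n), (2, n−1), (2, n)`, each equal to `1`. -/
def Mminus (n : ℕ) : Matrix (Fin n) (Fin n) (ZMod 2) :=
  Matrix.of fun r s => if (r : ℕ) ≤ 1 ∧ n - 2 ≤ (s : ℕ) then 1 else 0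

/-! ## Coordinates

A vector `c : ℕ × ℕ →₀ ZMod 2` encodes the sum of the boxes `E_{ij}` (one-based) with
coefficients `c (i, j)`. -/

abbrev CV := ℕ × ℕ →₀ ZMod 2

noncomputable abbrev eb (p : ℕ × ℕ) : CV := Finsupp.single p 1

noncomputable def Lrow (p : ℕ × ℕ) : CV →ₗ[ZMod 2] ZMod 2 :=
  Finsupp.lapply p + Finsupp.lapply (p.1, p.2 + 1) + Finsupp.lapply (p.1 + 1, p.2)
    + Finsupp.lapply (p.1 + 1, p.2 + 1)

lemma Lrow_apply (p : ℕ × ℕ) (y : CV) :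
    Lrow p y = y p + y (p.1, p.2 + 1) + y (p.1 + 1, p.2) + y (p.1 + 1, p.2 + 1) := rfl

noncomputable def bet : CV →ₗ[ZMod 2] CV →ₗ[ZMod 2] ZMod 2 :=
  Finsupp.linearCombination (ZMod 2) Lrow

lemma bet_eb (p : ℕ × ℕ) (y : CV) : bet (eb p) y = Lrow p y := by
  simp [bet, eb]

lemma bet_eb_right (i j : ℕ) (y : CV) :
    bet y (eb (i + 1, j + 1)) = y (i + 1, j + 1) + y (i + 1, j) + y (i, j + 1) + y (i, j) := by
  induction y using Finsupp.induction_linear with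
  | zero => simp
  | add f g hf hg => simp only [map_add, LinearMap.add_apply, hf, hg, Finsupp.add_apply]; ring
  | single q b =>
    obtain ⟨k, l⟩ := q
    simp only [bet, Finsupp.linearCombination_single, LinearMap.smul_apply, Lrow_apply,
      smul_eq_mul, Finsupp.single_apply, Prod.mk.injEq, eb]
    have e1 : (i + 1 = k ∧ j + 1 = l) ↔ (k = i + 1 ∧ l = j + 1) := by omega
    have e2 : (i + 1 = k ∧ j + 1 = l + 1) ↔ (k = i + 1 ∧ l = j) := by omega
    have e3 : (i + 1 = k + 1 ∧ j + 1 = l) ↔ (k = i ∧ l = j + 1) := by omega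
    have e4 : (i + 1 = k + 1 ∧ j + 1 = l + 1) ↔ (k = i ∧ l = j) := by omega
    simp only [e1, e2, e3, e4, mul_add, mul_ite, mul_one, mul_zero]

noncomputable def om (x y : CV) : ZMod 2 := bet x y + bet y x

noncomputable def Qf (x : CV) : ZMod 2 := bet x x

lemma om_comm (x y : CV) : om x y = om y x := add_comm _ _
lemma om_self (x : CV) : om x x = 0 := CharTwo.add_self_eq_zero _
lemma om_add_left (x y z : CV) : om (x + y) z = om x z + om y z := by
  simp only [om, map_add, LinearMap.add_apply]; ring
lemma om_add_right (x y z : CV) : om x (y + z) = om x y + om x z := by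
  simp only [om, map_add, LinearMap.add_apply]; ring
lemma om_smul_left (t : ZMod 2) (x z : CV) : om (t • x) z = t * om x z := by
  simp only [om, map_smul, LinearMap.smul_apply, smul_eq_mul]; ring
lemma om_sum_right {ι : Type*} (x : CV) (P : Finset ι) (f : ι → CV) :
    om x (∑ s ∈ P, f s) = ∑ s ∈ P, om x (f s) := by
  simp only [om, map_sum, LinearMap.sum_apply, Finset.sum_add_distrib]

lemma Qf_add (x y : CV) : Qf (x + y) = Qf x + Qf y + om x y := by
  simp only [Qf, om, map_add, LinearMap.add_apply]; ring
lemma Qf_smul (t : ZMod 2) (x : CV) : Qf (t • x) = t * Qf x := by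
  have : t * t = t := by revert t; decide
  simp only [Qf, map_smul, LinearMap.smul_apply, smul_eq_mul]
  rw [← mul_assoc, this]

lemma om_eb (i j : ℕ) (y : CV) : om y (eb (i + 1, j + 1)) =
    y (i + 1, j) + y (i, j + 1) + y (i, j) +
      (y (i + 1, j + 2) + y (i + 2, j + 1) + y (i + 2, j + 2)) := by
  rw [om, bet_eb_right, bet_eb, Lrow_apply]
  have := CharTwo.add_self_eq_zero (y (i + 1, j + 1))
  linear_combination this

lemma Qf_eb (p : ℕ × ℕ) : Qf (eb p) = 1 := by
  obtain ⟨k, l⟩ := p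
  rw [Qf, bet_eb, Lrow_apply]
  simp [eb]

/-- Transvection. -/
noncomputable def tv (v x : CV) : CV := x + om x v • v

lemma Qf_tv (p : ℕ × ℕ) (x : CV) : Qf (tv (eb p) x) = Qf x := by
  have h : ∀ t : ZMod 2, t * 1 + t * t = 0 := by decide
  rw [tv, Qf_add, Qf_smul, Qf_eb, om_comm x (_ • _), om_smul_left, om_comm (eb p) x]
  linear_combination h (om x (eb p))

/-- The matrix encoded by `c`. -/
def phi (n : ℕ) (c : CV) : Matrix (Fin n) (Fin n) (ZMod 2) :=
  Matrix.of fun r s => if (r : ℕ) ≤ (s : ℕ) then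
    c ((r : ℕ) + 1, (s : ℕ) + 1) + c ((r : ℕ) + 1, (s : ℕ)) + c ((r : ℕ), (s : ℕ) + 1)
      + c ((r : ℕ), (s : ℕ)) else 0

lemma gmove_phi (n i j : ℕ) (hij : i ≤ j) (hj : j + 2 ≤ n) (c : CV) :
    gmove n i j (phi n c) = phi n (tv (eb (i + 1, j + 1)) c) := by
  have ht : ent n (phi n c) i j + ent n (phi n c) (i + 1) (j + 1) = om c (eb (i + 1, j + 1)) := by
    rw [om_eb]
    have h1 : i < n ∧ j < n := by omega
    have h2 : i + 1 < n ∧ j + 1 < n := by omega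
    have h3 : i + 1 ≤ j + 1 := by omega
    simp only [ent, phi, h1, h2, hij, h3, and_self, dite_true, Matrix.of_apply, if_true]
    have := CharTwo.add_self_eq_zero (c (i + 1, j + 1))
    linear_combination this
  ext r s
  simp only [gmove, ht, Matrix.of_apply]
  by_cases hrs : (r : ℕ) ≤ (s : ℕ)
  · have key : phi n (tv (eb (i + 1, j + 1)) c) r s = phi n c r s
        + om c (eb (i + 1, j + 1)) * (
          (if i + 1 = (r : ℕ) + 1 ∧ j + 1 = (s : ℕ) + 1 then 1 else 0)
          + (if i + 1 = (r : ℕ) + 1 ∧ j + 1 = (s : ℕ) then 1 else 0)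
          + (if i + 1 = (r : ℕ) ∧ j + 1 = (s : ℕ) + 1 then 1 else 0)
          + (if i + 1 = (r : ℕ) ∧ j + 1 = (s : ℕ) then 1 else 0)) := by
      simp only [phi, Matrix.of_apply, hrs, if_true, tv, Finsupp.add_apply, Finsupp.smul_apply,
        eb, Finsupp.single_apply, Prod.mk.injEq, smul_eq_mul]
      ring
    change _ = phi n (tv (eb (i + 1, j + 1)) c) r s
    rw [key]
    by_cases a1 : (r : ℕ) = i
    · by_cases b1 : (s : ℕ) = j
      · simp [a1, b1, hij]
      · by_cases b2 : (s : ℕ) = j + 1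
        · have : i ≤ j + 1 := by omega
          simp [a1, b2, this]
        · have e1 : ¬ j = (s : ℕ) := by omega
          have e2 : ¬ j + 1 = (s : ℕ) := by omega
          simp [a1, b1, b2, e1, e2]
    · by_cases a2 : (r : ℕ) = i + 1
      · by_cases b1 : (s : ℕ) = j
        · have : i + 1 ≤ j := by omega
          simp [a2, b1, this]
        · by_cases b2 : (s : ℕ) = j + 1
          · simp [a2, b2, hij]
          · have e1 : ¬ j = (s : ℕ) := by omega
            have e2 : ¬ j + 1 = (s : ℕ) := by omega
            simp [a2, b1, b2, e1, e2]
      · have e1 : ¬ i = (r : ℕ) := by omega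
        have e2 : ¬ i + 1 = (r : ℕ) := by omega
        simp [a1, a2, e1, e2]
  · simp only [phi, Matrix.of_apply, hrs, and_false, if_false]


/-! ## The set of vanishing cycles -/

inductive Del (n : ℕ) : CV → Prop
  | base (i j : ℕ) (hij : i ≤ j) (hj : j + 2 ≤ n) : Del n (eb (i + 1, j + 1))
  | add (u v : CV) (hu : Del n u) (hv : Del n v) (h : om u v = 1) : Del n (u + v)

lemma tv_add (u v x : CV) (h : om u v = 1) : tv (u + v) x = tv u (tv v (tv u x)) := by
  have h2 : ∀ t : ZMod 2, t + t = 0 := CharTwo.add_self_eq_zero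
  have e1 : om (tv u x) v = om x v + om x u := by
    rw [tv, om_add_left, om_smul_left, h, mul_one]
  have e2 : om (tv v (tv u x)) u = om x v := by
    rw [tv, om_add_left, om_smul_left, e1, tv, om_add_left, om_smul_left, om_self, om_comm v u, h]
    linear_combination h2 (om x u)
  have e3 : tv u (tv v (tv u x)) = x + om x u • u + (om x v + om x u) • v + om x v • u := by
    conv_lhs => rw [tv, e2, tv, e1, tv]
  rw [e3, tv, om_add_right]
  module

lemma Del.orbit {n : ℕ} {v : CV} (h : Del n v) (x : CV) :
    InOrbit n (phi n x) (phi n (tv v x)) := by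
  induction h generalizing x with
  | base i j hij hj =>
    exact Relation.ReflTransGen.single ⟨i, j, hij, hj, (gmove_phi n i j hij hj x).symm⟩
  | add u v hu hv h ihu ihv =>
    rw [tv_add u v x h]
    exact ((ihu x).trans (ihv _)).trans (ihu _)

/-! ## The set `S` of boxes with odd coordinates -/

def Sset (m : ℕ) : Finset (ℕ × ℕ) :=
  ((Finset.range m).sigma (fun b => Finset.range (b + 1))).image
    (fun q => (2 * q.2 + 1, 2 * q.1 + 1))

lemma mem_Sset {m : ℕ} {p : ℕ × ℕ} :
    p ∈ Sset m ↔ ∃ a b, a ≤ b ∧ b < m ∧ p = (2 * a + 1, 2 * b + 1) := by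
  simp only [Sset, Finset.mem_image, Finset.mem_sigma, Finset.mem_range]
  constructor
  · rintro ⟨⟨b, a⟩, ⟨h1, h2⟩, rfl⟩
    exact ⟨a, b, by simpa [Nat.lt_succ_iff] using h2, h1, rfl⟩
  · rintro ⟨a, b, h1, h2, rfl⟩
    exact ⟨⟨b, a⟩, ⟨h2, by simpa [Nat.lt_succ_iff] using h1⟩, rfl⟩

lemma mem_Sset' {m i j : ℕ} :
    (i, j) ∈ Sset m ↔ i % 2 = 1 ∧ j % 2 = 1 ∧ i ≤ j ∧ j < 2 * m := by
  rw [mem_Sset]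
  constructor
  · rintro ⟨a, b, h1, h2, h⟩
    simp only [Prod.mk.injEq] at h
    omega
  · rintro ⟨h1, h2, h3, h4⟩
    exact ⟨i / 2, j / 2, by omega, by omega, by ext <;> simp <;> omega⟩

lemma card_Sset (m : ℕ) : (Sset m).card * 2 = m * (m + 1) := by
  rw [Sset, Finset.card_image_of_injOn, Finset.card_sigma]
  · simp only [Finset.card_range]
    induction m with
    | zero => simp
    | succ k ih => rw [Finset.sum_range_succ, add_mul, ih]; ring
  · rintro ⟨b, a⟩ _ ⟨b', a'⟩ _ h
    simp only [Prod.mk.injEq] at h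
    obtain rfl : a = a' := by omega
    obtain rfl : b = b' := by omega
    rfl

noncomputable def Jv (m : ℕ) : CV := ∑ s ∈ Sset m, eb s

lemma Jv_apply (m i j : ℕ) :
    Jv m (i, j) = if i % 2 = 1 ∧ j % 2 = 1 ∧ i ≤ j ∧ j < 2 * m then 1 else 0 := by
  simp only [← mem_Sset', Jv, Finsupp.finsetSum_apply, eb, Finsupp.single_apply]
  simp

lemma Jv_ones (m r s : ℕ) (hrs : r ≤ s) (hs : s < 2 * m) :
    Jv m (r + 1, s + 1) + Jv m (r + 1, s) + Jv m (r, s + 1) + Jv m (r, s) = 1 := by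
  simp only [Jv_apply]
  rcases Nat.mod_two_eq_zero_or_one r with hr | hr <;>
  rcases Nat.mod_two_eq_zero_or_one s with h | h
  · rw [if_pos (by omega), if_neg (by omega), if_neg (by omega), if_neg (by omega)]; rfl
  · rw [if_neg (by omega), if_pos (by omega), if_neg (by omega), if_neg (by omega)]; rfl
  · rw [if_neg (by omega), if_neg (by omega), if_pos (by omega), if_neg (by omega)]; rfl
  · rw [if_neg (by omega), if_neg (by omega), if_neg (by omega), if_pos (by omega)]; rfl

lemma om_Jv_eb (m i j : ℕ) (hij : i ≤ j) (hj : j + 2 ≤ 2 * m) :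
    om (Jv m) (eb (i + 1, j + 1)) = 0 := by
  rw [om_eb]
  have h1 := Jv_ones m i j hij (by omega)
  have h2 := Jv_ones m (i + 1) (j + 1) (by omega) (by omega)
  have h3 := CharTwo.add_self_eq_zero (Jv m (i + 1, j + 1))
  have h4 : (1 : ZMod 2) + 1 = 0 := rfl
  simp only [add_assoc, Nat.reduceAdd] at h2 ⊢
  linear_combination h1 + h2 - h3 + h4

lemma Del.om_Jv {m : ℕ} {v : CV} (h : Del (2 * m) v) : om v (Jv m) = 0 := by
  induction h with
  | base i j hij hj => rw [om_comm]; exact om_Jv_eb m i j hij hj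
  | add u v hu hv h ihu ihv => rw [om_add_left, ihu, ihv, add_zero]

lemma om_SS {m : ℕ} {p q : ℕ × ℕ} (hp : p ∈ Sset m) (hq : q ∈ Sset m) :
    om (eb p) (eb q) = 0 := by
  obtain ⟨a, b, h1, h2, rfl⟩ := mem_Sset.1 hp
  obtain ⟨c, d, h3, h4, rfl⟩ := mem_Sset.1 hq
  rw [om_eb]
  simp only [eb, Finsupp.single_apply, Prod.mk.injEq]
  repeat rw [if_neg (by omega)]
  rfl

lemma Qf_Jv (m : ℕ) : Qf (Jv m) = ((Sset m).card : ZMod 2) := by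
  have : ∀ s ∈ Sset m, Lrow s (Jv m) = 1 := by
    intro s hs
    obtain ⟨a, b, h1, h2, rfl⟩ := mem_Sset.1 hs
    simp only [Lrow_apply, Jv_apply]
    rw [if_pos (by omega), if_neg (by omega), if_neg (by omega), if_neg (by omega)]; rfl
  have e : bet (Jv m) = ∑ s ∈ Sset m, bet (eb s) := by rw [Jv, map_sum]
  rw [Qf, e, LinearMap.sum_apply]
  simp only [bet_eb]
  rw [Finset.sum_congr rfl this]
  simp

lemma Sset_Del {m : ℕ} {p : ℕ × ℕ} (hp : p ∈ Sset m) : Del (2 * m) (eb p) := by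
  obtain ⟨a, b, h1, h2, rfl⟩ := mem_Sset.1 hp
  exact Del.base _ _ (by omega) (by omega)

/-! ## Achievable subsets -/

def Ach (m : ℕ) (F : Finset (ℕ × ℕ)) : Prop :=
  ∃ c, Del (2 * m) c ∧ ∀ s ∈ Sset m, om c (eb s) = if s ∈ F then 1 else 0

lemma Ach.symm {m : ℕ} {F G : Finset (ℕ × ℕ)} (hF : Ach m F) (hG : Ach m G) (x : ℕ × ℕ)
    (hx : x ∈ Sset m) (hxF : x ∈ F) (hxG : x ∈ G) : Ach m (symmDiff F G) := by
  obtain ⟨c, hc, hcF⟩ := hF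
  obtain ⟨d, hd, hdG⟩ := hG
  have key : ∀ s ∈ Sset m, om (c + d) (eb s) = if s ∈ symmDiff F G then 1 else 0 := by
    intro s hs
    rw [om_add_left, hcF s hs, hdG s hs]
    have h4 : (1 : ZMod 2) + 1 = 0 := rfl
    by_cases h1 : s ∈ F <;> by_cases h2 : s ∈ G <;> simp [Finset.mem_symmDiff, h1, h2, h4]
  have h01 : ∀ t : ZMod 2, t = 1 ∨ t = 0 := by decide
  rcases h01 (om c d) with h | h
  · exact ⟨c + d, .add _ _ hc hd h, key⟩
  · refine ⟨c + (d + eb x), .add _ _ hc (.add _ _ hd (Sset_Del hx) ?_) ?_, ?_⟩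
    · rw [hdG x hx, if_pos hxG]
    · rw [om_add_right, h, hcF x hx, if_pos hxF, zero_add]
    · intro s hs
      rw [← key s hs, ← add_assoc, om_add_left, om_SS hx hs, add_zero]

lemma Ach.base_pair (m : ℕ) (i j : ℕ) (hij : i ≤ j) (hj : j + 2 ≤ 2 * m) (p q : ℕ × ℕ)
    (h : ∀ s ∈ Sset m, om (eb s) (eb (i + 1, j + 1)) = if s = p ∨ s = q then 1 else 0) :
    Ach m {p, q} := by
  refine ⟨_, .base i j hij hj, fun s hs => ?_⟩
  rw [om_comm, h s hs]
  simp

lemma Ach.step_right (m b : ℕ) (hb : b + 1 < m) : Ach m {(1, 2 * b + 1), (1, 2 * b + 3)} := by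
  refine Ach.base_pair m 0 (2 * b + 1) (by omega) (by omega) _ _ ?_
  intro s hs
  obtain ⟨c, d, h3, h4, rfl⟩ := mem_Sset.1 hs
  rw [om_eb]
  simp only [eb, Finsupp.single_apply, Prod.mk.injEq]
  split_ifs <;> first | omega | rfl | tauto

lemma Ach.step_up (m a b : ℕ) (hab : a + 1 ≤ b) (hb : b < m) :
    Ach m {(2 * a + 1, 2 * b + 1), (2 * a + 3, 2 * b + 1)} := by
  refine Ach.base_pair m (2 * a + 1) (2 * b) (by omega) (by omega) _ _ ?_
  intro s hs
  obtain ⟨c, d, h3, h4, rfl⟩ := mem_Sset.1 hs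
  rw [om_eb]
  simp only [eb, Finsupp.single_apply, Prod.mk.injEq]
  split_ifs <;> first | omega | rfl | tauto

lemma Ach.pair_trans {m : ℕ} {x y z : ℕ × ℕ} (hy : y ∈ Sset m) (h1 : Ach m {x, y})
    (h2 : Ach m {y, z}) (hxy : x ≠ y) (hyz : y ≠ z) (hxz : x ≠ z) : Ach m {x, z} := by
  have := h1.symm h2 y hy (by simp) (by simp)
  convert this using 1
  ext w
  simp only [Finset.mem_symmDiff, Finset.mem_insert, Finset.mem_singleton]
  grind

lemma Ach.from_o (m a b : ℕ) (hab : a ≤ b) (hb : b < m) (h : (a, b) ≠ (0, 0)) :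
    Ach m {(1, 1), (2 * a + 1, 2 * b + 1)} := by
  induction a with
  | zero =>
    induction b with
    | zero => simp at h
    | succ b ih =>
      by_cases hb0 : b = 0
      · subst hb0; exact Ach.step_right m 0 hb
      · refine Ach.pair_trans (y := (1, 2 * b + 1)) (mem_Sset.2 ⟨0, b, by omega, by omega, rfl⟩)
          (ih (by omega) (by omega) (by simpa using hb0)) (Ach.step_right m b hb) ?_ ?_ ?_ <;>
          simp only [ne_eq, Prod.mk.injEq] <;> omega
  | succ a ih =>
    have hne : (a, b) ≠ (0, 0) := by simp only [ne_eq, Prod.mk.injEq]; omega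
    refine Ach.pair_trans (y := (2 * a + 1, 2 * b + 1))
      (mem_Sset.2 ⟨a, b, by omega, by omega, rfl⟩)
      (ih (by omega) hne) (Ach.step_up m a b hab hb) ?_ ?_ ?_ <;>
      simp only [ne_eq, Prod.mk.injEq] <;> omega

lemma Ach.pair {m : ℕ} {x y : ℕ × ℕ} (hx : x ∈ Sset m) (hy : y ∈ Sset m) (hxy : x ≠ y) :
    Ach m {x, y} := by
  have key : ∀ z ∈ Sset m, z ≠ (1, 1) → Ach m {(1, 1), z} := by
    intro z hz h
    obtain ⟨a, b, h1, h2, rfl⟩ := mem_Sset.1 hz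
    refine Ach.from_o m a b h1 h2 ?_
    simp only [ne_eq, Prod.mk.injEq] at h ⊢
    omega
  by_cases h1 : x = (1, 1)
  · rw [h1]; exact key y hy (by rw [← h1]; exact hxy.symm)
  by_cases h2 : y = (1, 1)
  · rw [h2, Finset.pair_comm]; exact key x hx h1
  refine Ach.pair_trans (y := (1, 1)) ?_ ?_ (key y hy h2) h1 (Ne.symm h2) hxy
  · obtain ⟨a, b, h3, h4, rfl⟩ := mem_Sset.1 hx
    exact mem_Sset.2 ⟨0, 0, by omega, by omega, rfl⟩
  · rw [Finset.pair_comm]; exact key x hx h1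

def F0 : Finset (ℕ × ℕ) := {(1, 1), (1, 3), (3, 3), (3, 5)}

lemma F0_sub {m : ℕ} (hm : 3 ≤ m) : F0 ⊆ Sset m := by
  intro s hs
  simp only [F0, Finset.mem_insert, Finset.mem_singleton] at hs
  rcases hs with rfl | rfl | rfl | rfl <;> rw [mem_Sset'] <;> omega

lemma Ach.F0 {m : ℕ} (hm : 3 ≤ m) : Ach m F0 := by
  refine ⟨(eb (0 + 1, 1 + 1) + eb (1 + 1, 2 + 1)) + eb (1 + 1, 3 + 1),
    .add _ _ (.add _ _ (.base _ _ (by omega) (by omega)) (.base _ _ (by omega) (by omega)) ?_)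
      (.base _ _ (by omega) (by omega)) ?_, ?_⟩
  · rw [om_eb]; simp [eb, Finsupp.single_apply]
  · rw [om_eb]; simp [eb, Finsupp.single_apply]
  · intro s hs
    obtain ⟨c, d, h3, h4, rfl⟩ := mem_Sset.1 hs
    rw [om_comm, om_add_right, om_add_right, om_eb, om_eb, om_eb]
    simp only [eb, Finsupp.single_apply, Prod.mk.injEq, _root_.F0, Finset.mem_insert,
      Finset.mem_singleton]
    by_cases e1 : c = 0 ∧ d = 0
    · obtain ⟨rfl, rfl⟩ := e1; simp
    by_cases e2 : c = 0 ∧ d = 1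
    · obtain ⟨rfl, rfl⟩ := e2; simp; rfl
    by_cases e3 : c = 1 ∧ d = 1
    · obtain ⟨rfl, rfl⟩ := e3; simp
    by_cases e4 : c = 1 ∧ d = 2
    · obtain ⟨rfl, rfl⟩ := e4; simp
    repeat rw [if_neg (by omega)]
    rfl

lemma Ach.four {m : ℕ} (hm : 3 ≤ m) (F : Finset (ℕ × ℕ)) (hF : F ⊆ Sset m) (hc : F.card = 4) :
    Ach m F := by
  have h0 : _root_.F0.card = 4 := by decide
  induction hk : (_root_.F0 \ F).card generalizing F with
  | zero =>
    have hs : _root_.F0 ⊆ F := by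
      rw [Finset.card_eq_zero, Finset.sdiff_eq_empty_iff_subset] at hk; exact hk
    rw [← Finset.eq_of_subset_of_card_le hs (by omega)]
    exact Ach.F0 hm
  | succ k ih =>
    obtain ⟨x, hx⟩ : (_root_.F0 \ F).Nonempty := Finset.card_pos.1 (by omega)
    have hcc : (F \ _root_.F0).card = (_root_.F0 \ F).card :=
      Finset.card_sdiff_comm (by omega)
    obtain ⟨y, hy⟩ : (F \ _root_.F0).Nonempty := Finset.card_pos.1 (by omega)
    rw [Finset.mem_sdiff] at hx hy
    have hxy : x ≠ y := fun h => hx.2 (h ▸ hy.1)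
    have hxS := F0_sub hm hx.1
    have hyS := hF hy.1
    have h1 : Ach m (insert x (F.erase y)) := by
      apply ih
      · intro z hz
        rw [Finset.mem_insert, Finset.mem_erase] at hz
        rcases hz with rfl | hz
        · exact hxS
        · exact hF hz.2
      · rw [Finset.card_insert_of_notMem (by simp [hx.2]), Finset.card_erase_of_mem hy.1, hc]
      · have : _root_.F0 \ insert x (F.erase y) = (_root_.F0 \ F).erase x := by
          ext z
          simp only [Finset.mem_sdiff, Finset.mem_insert, Finset.mem_erase]
          grind
        rw [this, Finset.card_erase_of_mem (by simp [hx]), hk]; rfl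
    have h2 := h1.symm (Ach.pair hxS hyS hxy) x hxS (by simp) (by simp)
    convert h2 using 1
    ext z
    simp only [Finset.mem_symmDiff, Finset.mem_insert, Finset.mem_singleton, Finset.mem_erase]
    grind

/-! ## Adding up -/

lemma Del.three {n : ℕ} {b c x y : CV} (hb : Del n b) (hc : Del n c) (hx : Del n x) (hy : Del n y)
    (cb : om c b = 1) (cx : om c x = 1) (cy : om c y = 1) (bx : om b x = 0) (hby : om b y = 0)
    (xy : om x y = 0) : Del n (b + x + y) := by
  have h3 : (1 : ZMod 2) + 1 + 1 = 1 := rfl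
  have e1 : Del n (c + b) := .add _ _ hc hb cb
  have e2 : Del n (c + b + x) := .add _ _ e1 hx (by rw [om_add_left, cx, bx, add_zero])
  have e3 : Del n (c + b + x + y) :=
    .add _ _ e2 hy (by rw [om_add_left, om_add_left, cy, hby, xy, add_zero, add_zero])
  have e4 : Del n (c + (c + b + x + y)) := .add _ _ hc e3 (by
    rw [om_add_right, om_add_right, om_add_right, om_self, cb, cx, cy, zero_add, h3])
  have : b + x + y = c + (c + b + x + y) := by
    have : c + c = 0 := by ext p; exact CharTwo.add_self_eq_zero _
    rw [← add_assoc, ← add_assoc, ← add_assoc, this, zero_add]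
  rw [this]; exact e4

lemma Del.even_sum {m : ℕ} (hm : 3 ≤ m) (a0 a1 : ℕ × ℕ) (h0 : a0 ∈ Sset m) (h1 : a1 ∈ Sset m)
    (h01 : a0 ≠ a1) (k : ℕ) : ∀ P : Finset (ℕ × ℕ), P ⊆ Sset m → a0 ∉ P → a1 ∉ P →
      P.card = 2 * k → Del (2 * m) (eb a1 + ∑ s ∈ P, eb s) := by
  induction k with
  | zero =>
    intro P _ _ _ hk
    rw [Finset.card_eq_zero.1 hk, Finset.sum_empty, add_zero]
    exact Sset_Del h1
  | succ k ih =>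
    intro P hP hP0 hP1 hk
    obtain ⟨x, hx⟩ : P.Nonempty := Finset.card_pos.1 (by omega)
    have c1 : (P.erase x).card = 2 * k + 1 := by rw [Finset.card_erase_of_mem hx, hk]; omega
    obtain ⟨y, hy⟩ : (P.erase x).Nonempty := Finset.card_pos.1 (by omega)
    have c2 : ((P.erase x).erase y).card = 2 * k := by rw [Finset.card_erase_of_mem hy, c1]; rfl
    have hyP := Finset.mem_of_mem_erase hy
    have hyx := Finset.ne_of_mem_erase hy
    set R := (P.erase x).erase y with hR
    have hRP : R ⊆ P := (Finset.erase_subset _ _).trans (Finset.erase_subset _ _)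
    have hxR : x ∉ R := by simp [hR]
    have hyR : y ∉ R := by simp [hR]
    have hb := ih R (hRP.trans hP) (fun h => hP0 (hRP h)) (fun h => hP1 (hRP h)) c2
    have hxS := hP hx
    have hyS := hP hyP
    have x0 : a0 ≠ x := fun h => hP0 (h ▸ hx)
    have x1 : a1 ≠ x := fun h => hP1 (h ▸ hx)
    have y0 : a0 ≠ y := fun h => hP0 (h ▸ hyP)
    have y1 : a1 ≠ y := fun h => hP1 (h ▸ hyP)
    obtain ⟨c, hc, hcS⟩ := Ach.four hm {a0, a1, x, y} (by
      intro z hz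
      simp only [Finset.mem_insert, Finset.mem_singleton] at hz
      rcases hz with rfl | rfl | rfl | rfl <;> assumption) (by
      rw [Finset.card_insert_of_notMem (by simp [*]), Finset.card_insert_of_notMem (by simp [*]),
        Finset.card_insert_of_notMem (by simp [hyx.symm]), Finset.card_singleton])
    have orth : ∀ z ∈ Sset m, om (eb a1 + ∑ s ∈ R, eb s) (eb z) = 0 := by
      intro z hz
      rw [om_comm, om_add_right, om_sum_right, om_SS hz h1, zero_add]
      exact Finset.sum_eq_zero fun s hs => om_SS hz (hP (hRP hs))
    have hcb : om c (eb a1 + ∑ s ∈ R, eb s) = 1 := by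
      rw [om_add_right, om_sum_right, hcS a1 h1, if_pos (by simp), Finset.sum_eq_zero, add_zero]
      intro s hs
      rw [hcS s (hP (hRP hs)), if_neg]
      simp only [Finset.mem_insert, Finset.mem_singleton]
      rintro (rfl | rfl | rfl | rfl)
      · exact hP0 (hRP hs)
      · exact hP1 (hRP hs)
      · exact hxR hs
      · exact hyR hs
    have := Del.three hb hc (Sset_Del hxS) (Sset_Del hyS) hcb
      (by rw [hcS x hxS, if_pos (by simp)]) (by rw [hcS y hyS, if_pos (by simp)])
      (orth x hxS) (orth y hyS) (om_SS hxS hyS)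
    convert this using 1
    rw [← Finset.add_sum_erase P _ hx, ← Finset.add_sum_erase (P.erase x) _ hy]
    abel

lemma eb_add_self (v : CV) : v + v = 0 := by ext p; exact CharTwo.add_self_eq_zero _

lemma reach {m : ℕ} (hm : 3 ≤ m) (he : (Sset m).card % 2 = 0) (a0 : ℕ × ℕ) (h0 : a0 ∈ Sset m)
    (a1 : ℕ × ℕ) (h1 : a1 ∈ Sset m) (h01 : a0 ≠ a1) :
    InOrbit (2 * m) (phi (2 * m) (eb a0)) (phi (2 * m) (Jv m + eb a0)) := by
  have hJ : Jv m + eb a0 = eb a1 + ∑ s ∈ ((Sset m).erase a0).erase a1, eb s := by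
    rw [Finset.add_sum_erase _ eb (by simp [h1, h01.symm] : a1 ∈ (Sset m).erase a0), Jv,
      ← Finset.add_sum_erase _ eb h0, add_right_comm, eb_add_self, zero_add]
  have c2 : (((Sset m).erase a0).erase a1).card = (Sset m).card - 1 - 1 := by
    rw [Finset.card_erase_of_mem (by simp [h1, h01.symm]), Finset.card_erase_of_mem h0]
  have hw : Del (2 * m) (Jv m + eb a0) := by
    rw [hJ]
    refine Del.even_sum hm a0 a1 h0 h1 h01 (((Sset m).card - 2) / 2) _ ?_ ?_ ?_ ?_
    · exact (Finset.erase_subset _ _).trans (Finset.erase_subset _ _)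
    · simp
    · simp
    · omega
  obtain ⟨d, hd, hdS⟩ := Ach.pair h0 h1 h01
  have hda : om d (eb a0) = 1 := by rw [hdS a0 h0, if_pos (by simp)]
  have had : om (eb a0) d = 1 := by rw [om_comm, hda]
  have hdJ := hd.om_Jv
  have haJ := (Sset_Del h0).om_Jv
  have t1 := hd.orbit (eb a0)
  have t2 := hw.orbit (tv d (eb a0))
  have e1 : tv d (eb a0) = eb a0 + d := by rw [tv, had, one_smul]
  have e2 : tv (Jv m + eb a0) (eb a0 + d) = d + Jv m := by
    rw [tv, om_add_left, om_add_right, om_add_right, haJ, om_self, hdJ, hda, zero_add, zero_add,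
      zero_add, one_smul]
    calc eb a0 + d + (Jv m + eb a0) = d + Jv m + (eb a0 + eb a0) := by abel
      _ = _ := by rw [eb_add_self, add_zero]
  have t3 := (Sset_Del h0).orbit (d + Jv m)
  have e3 : tv (eb a0) (d + Jv m) = d + Jv m + eb a0 := by
    rw [tv, om_add_left, hda, om_comm, haJ, add_zero, one_smul]
  have t4 := hd.orbit (d + Jv m + eb a0)
  have e4 : tv d (d + Jv m + eb a0) = Jv m + eb a0 := by
    rw [tv, om_add_left, om_add_left, om_self, om_comm (Jv m), hdJ, had, zero_add, zero_add,
      one_smul]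
    calc d + Jv m + eb a0 + d = Jv m + eb a0 + (d + d) := by abel
      _ = _ := by rw [eb_add_self, add_zero]
  rw [e1] at t1 t2
  rw [e2] at t2
  rw [e3] at t3
  rw [e4] at t4
  exact ((t1.trans t2).trans t3).trans t4

/-! ## The invariant -/

def Supp (n : ℕ) (c : CV) : Prop := ∀ i j, c (i, j) ≠ 0 → 1 ≤ i ∧ i ≤ j ∧ j < n

lemma Supp.add {n : ℕ} {c d : CV} (hc : Supp n c) (hd : Supp n d) : Supp n (c + d) := by
  intro i j h
  by_cases h1 : c (i, j) = 0
  · by_cases h2 : d (i, j) = 0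
    · simp [h1, h2] at h
    · exact hd i j h2
  · exact hc i j h1

lemma Supp.smul {n : ℕ} {c : CV} (t : ZMod 2) (hc : Supp n c) : Supp n (t • c) := by
  intro i j h
  refine hc i j fun h0 => h ?_
  simp [h0]

lemma Supp.eb {n i j : ℕ} (hij : i ≤ j) (hj : j + 2 ≤ n) : Supp n (eb (i + 1, j + 1)) := by
  intro a b h
  simp only [Finsupp.single_apply, Prod.mk.injEq] at h
  split_ifs at h with h'
  · omega
  · exact absurd rfl h

lemma orbit_lift {n : ℕ} {c : CV} (hc : Supp n c) {N : Matrix (Fin n) (Fin n) (ZMod 2)}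
    (h : InOrbit n (phi n c) N) : ∃ d, Supp n d ∧ Qf d = Qf c ∧ N = phi n d := by
  induction h with
  | refl => exact ⟨c, hc, rfl, rfl⟩
  | tail _ hs ih =>
    obtain ⟨d, hd, hq, rfl⟩ := ih
    obtain ⟨i, j, hij, hj, rfl⟩ := hs
    exact ⟨_, hd.add ((Supp.eb hij hj).smul _), (Qf_tv _ _).trans hq, gmove_phi n i j hij hj d⟩

lemma phi_inj {n : ℕ} {c d : CV} (hc : Supp n c) (hd : Supp n d) (h : phi n c = phi n d) :
    c = d := by
  have hs : Supp n (c + d) := hc.add hd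
  have h0 : ∀ r s, r ≤ s → s < n → (c + d) (r + 1, s + 1) + (c + d) (r + 1, s) + (c + d) (r, s + 1)
      + (c + d) (r, s) = 0 := by
    intro r s hrs hsn
    have := congrFun (congrFun h ⟨r, by omega⟩) ⟨s, hsn⟩
    simp only [phi, Matrix.of_apply, hrs, if_true] at this
    simp only [Finsupp.add_apply]
    have h2 := CharTwo.add_self_eq_zero (d (r + 1, s + 1) + d (r + 1, s) + d (r, s + 1) + d (r, s))
    linear_combination this + h2
  generalize hx : c + d = x at hs h0
  have out : ∀ i j, ¬ (1 ≤ i ∧ i ≤ j ∧ j < n) → x (i, j) = 0 := fun i j h => by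
    by_contra h'; exact h (hs i j h')
  have key : ∀ r s, x (r, s) = 0 := by
    intro r
    induction r with
    | zero => intro s; exact out _ _ (by omega)
    | succ r ih =>
      have : ∀ k s, s + k = n → x (r + 1, s) = 0 := by
        intro k
        induction k with
        | zero => intro s hk; exact out _ _ (by omega)
        | succ k ihk =>
          intro s hk
          by_cases hrs : r ≤ s
          · have := h0 r s hrs (by omega)
            rw [ihk (s + 1) (by omega), ih, ih] at this
            simpa using this
          · exact out _ _ (by omega)
      intro s
      by_cases hsn : s ≤ n
      · exact this (n - s) s (by omega)
      · exact out _ _ (by omega)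
  have hx0 : c + d = 0 := by rw [hx]; ext ⟨i, j⟩; exact key i j
  calc c = c + d + d := by rw [add_assoc, eb_add_self, add_zero]
    _ = d := by rw [hx0, zero_add]

lemma phi_minus (m : ℕ) (hm : 3 ≤ m) : phi (2 * m) (eb (1, 2 * m - 1)) = Mminus (2 * m) := by
  ext ⟨r, hr⟩ ⟨s, hs⟩
  simp only [phi, Mminus, Matrix.of_apply, eb, Finsupp.single_apply, Prod.mk.injEq]
  split_ifs <;> first | omega | rfl | tauto

lemma phi_plus (m : ℕ) (hm : 3 ≤ m) :
    phi (2 * m) (Jv m + eb (1, 2 * m - 1)) = iotaT (2 * m) (Mminus (2 * m)) := by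
  ext r s
  have hr := r.2
  have hs := s.2
  by_cases hrs : (r : ℕ) ≤ (s : ℕ)
  · have h1 := Jv_ones m r s hrs hs
    have h2 := congrFun (congrFun (phi_minus m hm) r) s
    have h3 : Mminus (2 * m) (Fin.rev s) (Fin.rev r) = Mminus (2 * m) r s := by
      simp only [Mminus, Matrix.of_apply, Fin.val_rev]
      congr 1
      apply propext
      omega
    simp only [iotaT, Matrix.of_apply, hrs, if_true, h3, ← h2]
    simp only [phi, Matrix.of_apply, hrs, if_true, Finsupp.add_apply]
    linear_combination h1
  · simp only [phi, iotaT, Matrix.of_apply, hrs, if_false]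

theorem orbits_Mpm_disjoint_iff (n : ℕ) (hn : 6 ≤ n) (heven : n % 2 = 0) :
    Disjoint {N | InOrbit n (iotaT n (Mminus n)) N} {N | InOrbit n (Mminus n) N} ↔
      (n % 8 = 2 ∨ n % 8 = 4) := by
  obtain ⟨m, rfl⟩ : ∃ m, n = 2 * m := ⟨n / 2, by omega⟩
  have hm : 3 ≤ m := by omega
  have hS : ((Sset m).card % 2 = 1) ↔ (2 * m % 8 = 2 ∨ 2 * m % 8 = 4) := by
    have h := card_Sset m
    have h4 : (Sset m).card * 2 % 4 = (m % 4) * ((m % 4) + 1) % 4 := by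
      rw [h, Nat.mul_mod, Nat.add_mod]; simp [Nat.mul_mod, Nat.add_mod]
    have : m % 4 < 4 := Nat.mod_lt _ (by norm_num)
    interval_cases hh : m % 4 <;> omega
  have h0 : (1, 2 * m - 1) ∈ Sset m := mem_Sset'.2 (by omega)
  have h1 : (1, 1) ∈ Sset m := mem_Sset'.2 (by omega)
  rw [← hS]
  constructor
  · intro hd
    by_contra hne
    have := reach hm (by omega) _ h0 _ h1 (by simp only [ne_eq, Prod.mk.injEq]; omega)
    rw [phi_minus m hm, phi_plus m hm] at this
    exact (Set.disjoint_left.1 hd) (Relation.ReflTransGen.refl :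
      InOrbit (2 * m) (iotaT (2 * m) (Mminus (2 * m))) (iotaT (2 * m) (Mminus (2 * m)))) this
  · intro hodd
    rw [Set.disjoint_left]
    intro N hN1 hN2
    change InOrbit (2 * m) _ N at hN1 hN2
    rw [← phi_plus m hm] at hN1
    rw [← phi_minus m hm] at hN2
    have s0 : Supp (2 * m) (eb (1, 2 * m - 1)) := by
      intro a b h
      simp only [Finsupp.single_apply, Prod.mk.injEq] at h
      split_ifs at h with h'
      · omega
      · exact absurd rfl h
    have sJ : Supp (2 * m) (Jv m) := by
      intro a b h
      simp only [Jv_apply] at h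
      split_ifs at h with h'
      · omega
      · exact absurd rfl h
    obtain ⟨c, hc, hq, rfl⟩ := orbit_lift (sJ.add s0) hN1
    obtain ⟨d, hd, hq', he⟩ := orbit_lift s0 hN2
    have := phi_inj hc hd he
    subst this
    rw [hq, Qf_add, om_comm, (Sset_Del h0).om_Jv, Qf_Jv, Qf_eb, add_zero] at hq'
    have hz : ((Sset m).card : ZMod 2) = 0 := by simpa using hq'
    rw [ZMod.natCast_eq_zero_iff] at hz
    omega
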